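/- arXiv:0709.0637 — 4 statements merged into one kernel-verified Lean document; each statement's English description precedes it below -/
import Mathlib

section
/- Let m ≥ 1 be an integer, t ∈ ℝ, h > 0, and let b_1, …, b_m be real numbers with b_j < 1 for every j. Then, with the convention s_0 = t, the Lebesgue integral over the open simplex {(s_1,…,s_m) ∈ ℝ^m : t < s_1 < s_2 < ⋯ < s_m < t+h} of the function ∏_{j=1}^m (s_j − s_{j−1})^{−b_j} equals h^{m − Σ_{j=1}^m b_j} · (∏_{j=1}^m Γ(1 − b_j)) / Γ(1 + m − Σ_{j=1}^m b_j). -/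
open MeasureTheory

/-!
Weighting the last increment `T - s_m` as well turns the integral into the Dirichlet integral
`∫ ∏ⱼ (s_{j+1} - s_j) ^ (αⱼ - 1) = (T - t) ^ (∑ αⱼ - 1) ∏ Γ(αⱼ) / Γ(∑ αⱼ)` over paths from `t` to
`T`, which reproduces itself under induction on `m`: for fixed `s₁ = x` the inner integral is the
same expression for paths from `x` to `T`, and the remaining integral over `x` is the Beta integral
`∫ₜᵀ (x - t) ^ (α₀ - 1) (T - x) ^ (A - 1) dx` with `A = α₁ + ⋯ + α_m`. The Gamma factors telescope
because `Γ(A)` occurs in the numerator of `B(α₀, A)`. As the integrands are nonnegative, the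
induction takes place in `[0, ∞]`, where Tonelli's theorem needs no integrability.
The case `αⱼ = 1 - bⱼ` with last exponent `1` is Ehm's identity.
-/

open Set ProbabilityTheory

section BetaIntegral

variable {α β : ℝ}

lemma lintegral_Ioo_zero_one_rpow_mul_one_sub_rpow (hα : 0 < α) (hβ : 0 < β) :
    ∫⁻ x in Ioo (0 : ℝ) 1, ENNReal.ofReal (x ^ (α - 1) * (1 - x) ^ (β - 1)) =
      ENNReal.ofReal (beta α β) := by
  have hB : 0 < beta α β := beta_pos hα hβ
  calc ∫⁻ x in Ioo (0 : ℝ) 1, ENNReal.ofReal (x ^ (α - 1) * (1 - x) ^ (β - 1))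
      = ∫⁻ x in Ioo (0 : ℝ) 1, ENNReal.ofReal (beta α β) *
          ENNReal.ofReal (1 / beta α β * x ^ (α - 1) * (1 - x) ^ (β - 1)) := by
        congr with x
        rw [← ENNReal.ofReal_mul hB.le]
        congr 1
        field_simp
    _ = ENNReal.ofReal (beta α β) := by
        rw [lintegral_const_mul _ (by fun_prop), ← lintegral_betaPDF,
          lintegral_betaPDF_eq_one hα hβ, mul_one]

lemma setLIntegral_Ioo_eq_mul_setLIntegral_Ioo_zero_one {a b : ℝ} (hab : a < b) (f : ℝ → ENNReal) :
    ∫⁻ x in Ioo a b, f x =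
      ENNReal.ofReal (b - a) * ∫⁻ x in Ioo (0 : ℝ) 1, f ((b - a) * x + a) := by
  have hba : 0 < b - a := sub_pos.2 hab
  have himage : (fun x ↦ (b - a) * x + a) '' Ioo 0 1 = Ioo a b := by
    simp [image_affine_Ioo hba]
  have hderiv (x : ℝ) : HasDerivAt (fun x ↦ (b - a) * x + a) (b - a) x := by
    simpa using ((hasDerivAt_id x).const_mul (b - a)).add_const a
  have hinj : Function.Injective fun x ↦ (b - a) * x + a :=
    (add_left_injective a).comp (mul_right_injective₀ hba.ne')
  rw [← himage, lintegral_image_eq_lintegral_abs_deriv_mul measurableSet_Ioo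
    (fun x _ ↦ (hderiv x).hasDerivWithinAt) hinj.injOn, abs_of_pos hba,
    lintegral_const_mul' _ _ ENNReal.ofReal_ne_top]

lemma lintegral_Ioo_sub_rpow_mul_sub_rpow (hα : 0 < α) (hβ : 0 < β) {a b : ℝ} (hab : a < b) :
    ∫⁻ x in Ioo a b, ENNReal.ofReal ((x - a) ^ (α - 1) * (b - x) ^ (β - 1)) =
      ENNReal.ofReal ((b - a) ^ (α + β - 1) * beta α β) := by
  have hba : 0 < b - a := sub_pos.2 hab
  have hscale : ∀ x ∈ Ioo (0 : ℝ) 1,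
      ENNReal.ofReal (((b - a) * x + a - a) ^ (α - 1) * (b - ((b - a) * x + a)) ^ (β - 1)) =
        ENNReal.ofReal ((b - a) ^ (α + β - 2)) *
          ENNReal.ofReal (x ^ (α - 1) * (1 - x) ^ (β - 1)) := by
    rintro x ⟨hx₀, hx₁⟩
    rw [← ENNReal.ofReal_mul (by positivity), add_sub_cancel_right,
      show b - ((b - a) * x + a) = (b - a) * (1 - x) by ring, Real.mul_rpow hba.le hx₀.le,
      Real.mul_rpow hba.le (sub_nonneg.2 hx₁.le),
      show α + β - 2 = (α - 1) + (β - 1) by ring, Real.rpow_add hba]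
    ring_nf
  rw [setLIntegral_Ioo_eq_mul_setLIntegral_Ioo_zero_one hab,
    setLIntegral_congr_fun measurableSet_Ioo hscale, lintegral_const_mul _ (by fun_prop),
    lintegral_Ioo_zero_one_rpow_mul_one_sub_rpow hα hβ, ← mul_assoc,
    ← ENNReal.ofReal_mul hba.le, ← ENNReal.ofReal_mul (by positivity),
    show α + β - 1 = 1 + (α + β - 2) by ring, Real.rpow_add hba, Real.rpow_one]

end BetaIntegral

section MultivariateBeta

/-- The multivariate Beta function `B(α) = ∏ Γ(αᵢ) / Γ(∑ αᵢ)`, the normalising constant of the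
Dirichlet distribution. -/
noncomputable def multivariateBeta {ι : Type*} [Fintype ι] (α : ι → ℝ) : ℝ :=
  (∏ i, Real.Gamma (α i)) / Real.Gamma (∑ i, α i)

lemma multivariateBeta_nonneg {ι : Type*} [Fintype ι] {α : ι → ℝ} (hα : ∀ i, 0 ≤ α i) :
    0 ≤ multivariateBeta α :=
  div_nonneg (Finset.prod_nonneg fun i _ ↦ Real.Gamma_nonneg_of_nonneg (hα i))
    (Real.Gamma_nonneg_of_nonneg (Finset.sum_nonneg fun i _ ↦ hα i))

lemma multivariateBeta_of_unique {ι : Type*} [Fintype ι] [Unique ι] {α : ι → ℝ}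
    (hα : 0 < α default) : multivariateBeta α = 1 := by
  simp [multivariateBeta, (Real.Gamma_pos_of_pos hα).ne']

lemma multivariateBeta_succ {n : ℕ} {α : Fin (n + 1) → ℝ} (hα : 0 < ∑ i, Fin.tail α i) :
    multivariateBeta α = beta (α 0) (∑ i, Fin.tail α i) * multivariateBeta (Fin.tail α) := by
  have hΓ : Real.Gamma (∑ i, Fin.tail α i) ≠ 0 := (Real.Gamma_pos_of_pos hα).ne'
  rw [multivariateBeta, multivariateBeta, beta, Fin.prod_univ_succ, Fin.sum_univ_succ]
  simp only [Fin.tail] at hΓ ⊢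
  field_simp

end MultivariateBeta

lemma lintegral_pi_fin_succ {n : ℕ} {E : Fin (n + 1) → Type*} [∀ i, MeasurableSpace (E i)]
    (μ : ∀ i, Measure (E i)) [∀ i, SigmaFinite (μ i)] {f : (∀ i, E i) → ENNReal}
    (hf : Measurable f) :
    ∫⁻ s, f s ∂Measure.pi μ =
      ∫⁻ x, ∫⁻ s, f (Fin.cons x s) ∂Measure.pi (fun i ↦ μ i.succ) ∂μ 0 := by
  have hpres := (measurePreserving_piFinSuccAbove μ 0).symm
  have hcons (x : E 0) (s : ∀ i : Fin n, E i.succ) :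
      (MeasurableEquiv.piFinSuccAbove E 0).symm (x, s) = Fin.cons x s := Fin.insertNth_zero x s
  rw [← hpres.lintegral_comp hf]
  refine (lintegral_prod _ (hf.comp hpres.measurable).aemeasurable).trans ?_
  exact lintegral_congr fun x ↦ lintegral_congr fun s ↦ congrArg f (hcons x s)

section PinnedPath

variable {E : Type*} {m : ℕ} {t T : E}

/-- The finite sequence `t, s₁, …, s_m, T`: the points of `s` together with both endpoints. -/
def pinnedPath (t T : E) (s : Fin m → E) : Fin (m + 2) → E :=
  Fin.cons t (Fin.snoc s T : Fin (m + 1) → E)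

lemma pinnedPath_cons (x : E) (s : Fin m → E) :
    pinnedPath t T (Fin.cons x s : Fin (m + 1) → E) = Fin.cons t (pinnedPath x T s) := by
  simp only [pinnedPath, ← Fin.cons_snoc_eq_snoc_cons]

lemma pinnedPath_zero (s : Fin m → E) : pinnedPath t T s 0 = t := rfl

lemma pinnedPath_last (s : Fin m → E) : pinnedPath t T s (Fin.last _) = T := by
  simp [pinnedPath, ← Fin.succ_last]

lemma pinnedPath_castSucc_succ (s : Fin m → E) (j : Fin m) :
    pinnedPath t T s j.castSucc.succ = s j := by
  simp [pinnedPath]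

lemma pinnedPath_castSucc_castSucc (s : Fin m → E) (j : Fin m) :
    pinnedPath t T s j.castSucc.castSucc =
      if (j : ℕ) = 0 then t else s ⟨(j : ℕ) - 1, lt_of_le_of_lt (Nat.sub_le _ _) j.isLt⟩ := by
  obtain ⟨_ | k, hk⟩ := j
  · rfl
  · exact pinnedPath_castSucc_succ s ⟨k, by lia⟩

lemma pinnedPath_last_castSucc (hm : 1 ≤ m) (s : Fin m → E) :
    pinnedPath t T s (Fin.last m).castSucc = s ⟨m - 1, Nat.sub_lt hm one_pos⟩ := by
  obtain ⟨n, rfl⟩ := Nat.exists_eq_add_of_le' hm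
  exact pinnedPath_castSucc_succ s (Fin.last n)

@[fun_prop]
lemma continuous_pinnedPath [TopologicalSpace E] :
    Continuous (pinnedPath t T : (Fin m → E) → Fin (m + 2) → E) := by
  unfold pinnedPath
  fun_prop

variable [Preorder E]

/-- The open simplex `t < s₁ < ⋯ < s_m < T`; for `m = 0` it is a point or empty according to
whether `t < T`. -/
def openSimplex (m : ℕ) (t T : E) : Set (Fin m → E) :=
  {s | StrictMono (pinnedPath t T s)}

lemma lt_of_mem_openSimplex {s : Fin m → E} (hs : s ∈ openSimplex m t T) : t < T := by
  simpa only [pinnedPath_zero, pinnedPath_last] using hs (Fin.last_pos' (n := m + 1))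

lemma openSimplex_zero (htT : t < T) : openSimplex 0 t T = univ :=
  eq_univ_of_forall fun s ↦ by
    simpa [openSimplex, Fin.strictMono_iff_lt_succ, pinnedPath, Fin.snoc] using htT

lemma cons_mem_openSimplex {x : E} {s : Fin m → E} :
    (Fin.cons x s : Fin (m + 1) → E) ∈ openSimplex (m + 1) t T ↔
      x ∈ Ioo t T ∧ s ∈ openSimplex m x T := by
  have hcons : (Fin.cons x s : Fin (m + 1) → E) ∈ openSimplex (m + 1) t T ↔
      t < x ∧ s ∈ openSimplex m x T := by
    rw [openSimplex, mem_ofPred_eq, pinnedPath_cons]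
    exact strictMono_vecCons
  rw [hcons]
  exact ⟨fun ⟨htx, hs⟩ ↦ ⟨⟨htx, lt_of_mem_openSimplex hs⟩, hs⟩, fun ⟨hx, hs⟩ ↦ ⟨hx.1, hs⟩⟩

lemma openSimplex_eq_setOf (hm : 1 ≤ m) :
    openSimplex m t T =
      {s | (∀ j : Fin m, (if (j : ℕ) = 0 then t
          else s ⟨(j : ℕ) - 1, lt_of_le_of_lt (Nat.sub_le _ _) j.isLt⟩) < s j) ∧
        s ⟨m - 1, Nat.sub_lt hm one_pos⟩ < T} := by
  simp only [openSimplex, Fin.strictMono_iff_lt_succ, Fin.forall_fin_succ',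
    pinnedPath_castSucc_castSucc, pinnedPath_castSucc_succ, pinnedPath_last_castSucc hm,
    Fin.succ_last, pinnedPath_last]

end PinnedPath

lemma isOpen_openSimplex {E : Type*} [TopologicalSpace E] [LinearOrder E] [OrderClosedTopology E]
    {m : ℕ} {t T : E} : IsOpen (openSimplex m t T) := by
  simp only [openSimplex, Fin.strictMono_iff_lt_succ, ofPred_forall]
  exact isOpen_iInter_of_finite fun j ↦ isOpen_lt (by fun_prop) (by fun_prop)

section DirichletIntegral

variable {m : ℕ} {t T : ℝ}

lemma setLIntegral_openSimplex_succ {f : (Fin (m + 1) → ℝ) → ENNReal} (hf : Measurable f) :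
    ∫⁻ s in openSimplex (m + 1) t T, f s =
      ∫⁻ x in Ioo t T, ∫⁻ s in openSimplex m x T, f (Fin.cons x s) := by
  have hcons (x : ℝ) (s : Fin m → ℝ) :
      (openSimplex (m + 1) t T).indicator f (Fin.cons x s) =
        (Ioo t T).indicator
          (fun x ↦ (openSimplex m x T).indicator (fun s ↦ f (Fin.cons x s)) s) x := by
    classical simp only [indicator_apply, cons_mem_openSimplex, ite_and]
  rw [← lintegral_indicator isOpen_openSimplex.measurableSet, volume_pi,
    lintegral_pi_fin_succ _ (hf.indicator isOpen_openSimplex.measurableSet),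
    ← lintegral_indicator measurableSet_Ioo]
  refine lintegral_congr fun x ↦ ?_
  by_cases hx : x ∈ Ioo t T
  · simp only [hcons, indicator_of_mem hx,
      lintegral_indicator isOpen_openSimplex.measurableSet, volume_pi]
  · simp only [hcons, indicator_of_notMem hx, lintegral_zero]

/-- The unnormalised Dirichlet density `∏ⱼ (s_{j+1} - s_j) ^ (αⱼ - 1)` in the `m + 1` increments of
the path `s₀ = t, s₁, …, s_m, s_{m+1} = T`. The exponents are indexed from `0`, so the last one
belongs to `T - s_m`. -/
noncomputable def dirichletWeight (α : Fin (m + 1) → ℝ) (t T : ℝ) (s : Fin m → ℝ) : ℝ :=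
  ∏ j, (pinnedPath t T s j.succ - pinnedPath t T s j.castSucc) ^ (α j - 1)

lemma measurable_dirichletWeight (α : Fin (m + 1) → ℝ) : Measurable (dirichletWeight α t T) :=
  Finset.measurable_prod _ fun _ _ ↦ Measurable.pow_const (by fun_prop) _

lemma dirichletWeight_nonneg (α : Fin (m + 1) → ℝ) {s : Fin m → ℝ} (hs : s ∈ openSimplex m t T) :
    0 ≤ dirichletWeight α t T s :=
  Finset.prod_nonneg fun j _ ↦ Real.rpow_nonneg (sub_nonneg.2 (hs j.castSucc_lt_succ).le) _

lemma dirichletWeight_zero (α : Fin 1 → ℝ) (s : Fin 0 → ℝ) :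
    dirichletWeight α t T s = (T - t) ^ (α 0 - 1) := by
  simp [dirichletWeight, pinnedPath, Fin.snoc]

lemma dirichletWeight_cons (α : Fin (m + 2) → ℝ) (x : ℝ) (s : Fin m → ℝ) :
    dirichletWeight α t T (Fin.cons x s : Fin (m + 1) → ℝ) =
      (x - t) ^ (α 0 - 1) * dirichletWeight (Fin.tail α) x T s := by
  simp only [dirichletWeight, pinnedPath_cons, Fin.prod_univ_succ (n := m + 1), Fin.cons_succ,
    Fin.castSucc_zero, Fin.cons_zero, pinnedPath_zero, ← Fin.succ_castSucc, Fin.tail]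

theorem lintegral_dirichletWeight (htT : t < T) {α : Fin (m + 1) → ℝ} (hα : ∀ j, 0 < α j) :
    ∫⁻ s in openSimplex m t T, ENNReal.ofReal (dirichletWeight α t T s) =
      ENNReal.ofReal ((T - t) ^ ((∑ j, α j) - 1) * multivariateBeta α) := by
  induction m generalizing t with
  | zero =>
    simp [openSimplex_zero htT, dirichletWeight_zero,
      multivariateBeta_of_unique (ι := Fin 1) (hα 0), volume_pi, Measure.pi_empty_univ]
  | succ m ih =>
    set A : ℝ := ∑ j, Fin.tail α j
    set B : ℝ := multivariateBeta (Fin.tail α)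
    have hA_pos : 0 < A := Finset.sum_pos (fun j _ ↦ hα j.succ) Finset.univ_nonempty
    have hB : 0 ≤ B := multivariateBeta_nonneg fun j ↦ (hα j.succ).le
    have hinner : ∀ x ∈ Ioo t T,
        ∫⁻ s in openSimplex m x T, ENNReal.ofReal (dirichletWeight α t T (Fin.cons x s)) =
          ENNReal.ofReal ((x - t) ^ (α 0 - 1) * (T - x) ^ (A - 1)) * ENNReal.ofReal B := by
      rintro x ⟨htx, hxT⟩
      have hxt : 0 ≤ (x - t) ^ (α 0 - 1) := Real.rpow_nonneg (sub_nonneg.2 htx.le) _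
      simp only [dirichletWeight_cons, ENNReal.ofReal_mul hxt]
      rw [lintegral_const_mul _ (measurable_dirichletWeight _).ennreal_ofReal,
        ih hxT (α := Fin.tail α) fun j ↦ hα j.succ, ENNReal.ofReal_mul' hB, mul_assoc]
    calc ∫⁻ s in openSimplex (m + 1) t T, ENNReal.ofReal (dirichletWeight α t T s)
        = ∫⁻ x in Ioo t T,
            ENNReal.ofReal ((x - t) ^ (α 0 - 1) * (T - x) ^ (A - 1)) * ENNReal.ofReal B := by
          rw [setLIntegral_openSimplex_succ (measurable_dirichletWeight α).ennreal_ofReal,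
            setLIntegral_congr_fun measurableSet_Ioo hinner]
      _ = ENNReal.ofReal ((T - t) ^ (α 0 + A - 1) * beta (α 0) A) * ENNReal.ofReal B := by
          rw [lintegral_mul_const _ (by fun_prop),
            lintegral_Ioo_sub_rpow_mul_sub_rpow (hα 0) hA_pos htT]
      _ = ENNReal.ofReal ((T - t) ^ ((∑ j, α j) - 1) * multivariateBeta α) := by
          rw [← ENNReal.ofReal_mul' hB, mul_assoc, multivariateBeta_succ hA_pos,
            Fin.sum_univ_succ α]
          rfl

lemma dirichletWeight_snoc_one_sub (b : Fin m → ℝ) (s : Fin m → ℝ) :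
    dirichletWeight (Fin.snoc (fun j ↦ 1 - b j) 1) t T s =
      ∏ j : Fin m, (s j - (if (j : ℕ) = 0 then t
        else s ⟨(j : ℕ) - 1, lt_of_le_of_lt (Nat.sub_le _ _) j.isLt⟩)) ^ (-(b j)) := by
  simp [dirichletWeight, Fin.prod_univ_castSucc, pinnedPath_castSucc_castSucc,
    pinnedPath_castSucc_succ]

lemma sum_snoc_one_sub (b : Fin m → ℝ) :
    ∑ j, (Fin.snoc (fun j ↦ 1 - b j) 1 : Fin (m + 1) → ℝ) j = 1 + (m : ℝ) - ∑ j, b j := by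
  simp only [Fin.sum_snoc, Finset.sum_sub_distrib, Finset.sum_const, Finset.card_univ,
    Fintype.card_fin, nsmul_eq_mul, mul_one]
  ring

lemma multivariateBeta_snoc_one_sub (b : Fin m → ℝ) :
    multivariateBeta (Fin.snoc (fun j ↦ 1 - b j) 1 : Fin (m + 1) → ℝ) =
      (∏ j, Real.Gamma (1 - b j)) / Real.Gamma (1 + (m : ℝ) - ∑ j, b j) := by
  rw [multivariateBeta, sum_snoc_one_sub, Fin.prod_univ_castSucc]
  simp

theorem simplex_integral_identity_general (htT : t < T) {α : Fin (m + 1) → ℝ}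
    (hα : ∀ j, 0 < α j) :
    ∫ s in openSimplex m t T, dirichletWeight α t T s =
      (T - t) ^ ((∑ j, α j) - 1) * multivariateBeta α := by
  have hnonneg : 0 ≤ᵐ[volume.restrict (openSimplex m t T)] dirichletWeight α t T :=
    (ae_restrict_mem isOpen_openSimplex.measurableSet).mono fun _ ↦ dirichletWeight_nonneg α
  rw [integral_eq_lintegral_of_nonneg_ae hnonneg
    (measurable_dirichletWeight α).aestronglyMeasurable, lintegral_dirichletWeight htT hα,
    ENNReal.toReal_ofReal]
  exact mul_nonneg (Real.rpow_nonneg (sub_nonneg.2 htT.le) _)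
    (multivariateBeta_nonneg fun j ↦ (hα j).le)

end DirichletIntegral

/-- Dirichlet-type simplex integral identity (Ehm): for `m ≥ 1`, `t ∈ ℝ`, `h > 0`
and exponents `b j < 1`, with the convention `s₀ = t`,
`∫_{t < s₁ < ⋯ < s_m < t+h} ∏ (s_j - s_{j-1})^{-b_j} ds
  = h^{m - ∑ b_j} · ∏ Γ(1 - b_j) / Γ(1 + m - ∑ b_j)`. -/
theorem simplex_integral_identity (m : ℕ) (hm : 1 ≤ m) (t h : ℝ) (hh : 0 < h)
    (b : Fin m → ℝ) (hb : ∀ j, b j < 1) :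
    ∫ s : Fin m → ℝ in
      {s | (∀ j : Fin m,
              (if (j : ℕ) = 0 then t
               else s ⟨(j : ℕ) - 1, lt_of_le_of_lt (Nat.sub_le _ _) j.isLt⟩) < s j) ∧
           s ⟨m - 1, by omega⟩ < t + h},
      ∏ j : Fin m,
        (s j - (if (j : ℕ) = 0 then t
                else s ⟨(j : ℕ) - 1, lt_of_le_of_lt (Nat.sub_le _ _) j.isLt⟩)) ^ (-(b j)) =
    h ^ ((m : ℝ) - ∑ j, b j) * (∏ j, Real.Gamma (1 - b j)) /
      Real.Gamma (1 + (m : ℝ) - ∑ j, b j) := by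
  have hα : ∀ j, 0 < (Fin.snoc (fun j ↦ 1 - b j) 1 : Fin (m + 1) → ℝ) j :=
    Fin.forall_fin_succ'.2 ⟨fun j ↦ by simpa using hb j, by simp⟩
  simp only [← openSimplex_eq_setOf hm, ← dirichletWeight_snoc_one_sub (T := t + h)]
  rw [simplex_integral_identity_general (lt_add_of_pos_right t hh) hα,
    multivariateBeta_snoc_one_sub, sum_snoc_one_sub, mul_div_assoc]
  ring_nf
end

section
/- Let a < b be real numbers and let H : ℝ → ℝ be measurable. If the Lebesgue double integral ∫_a^b ∫_a^b |t−s|^{−H(t)} ds dt is finite, then H(t) < 1 for Lebesgue-almost every t ∈ [a,b]. -/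
open MeasureTheory

/-!
A finite double integral forces the inner integral to be finite for almost every `t`. But for
`t ∈ [a, b]` the inner integral diverges as soon as `1 ≤ H t`: already `|t - s|⁻¹` is not
integrable near `s = t`, and on a bounded interval `|t - s| ^ (-p)` with `1 ≤ p` dominates a
multiple of it.
-/

section

variable {a b p t : ℝ}

theorem inv_le_rpow_sub_one_mul_rpow_neg {x L : ℝ} (hx : 0 ≤ x) (hxL : x ≤ L) (hp : 1 ≤ p) :
    x⁻¹ ≤ L ^ (p - 1) * x ^ (-p) := by
  obtain rfl | hx_pos := hx.eq_or_lt
  · -- Both sides are the junk value `0` here, so `s = t` needs no separate treatment below.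
    rw [inv_zero]
    positivity
  · calc
      x⁻¹ = x ^ (p - 1) * x ^ (-p) := by
        rw [← Real.rpow_add hx_pos, ← Real.rpow_neg_one]
        ring_nf
      _ ≤ L ^ (p - 1) * x ^ (-p) := by
        gcongr

theorem setLIntegral_Icc_inv_abs_sub_eq_top (hab : a < b) (ht : t ∈ Set.Icc a b) :
    ∫⁻ s in Set.Icc a b, ENNReal.ofReal |t - s|⁻¹ = ⊤ := by
  by_contra hfin
  have hint : IntegrableOn (fun s ↦ (s - t)⁻¹) (Set.Icc a b) := by
    refine ⟨by fun_prop, (hasFiniteIntegral_iff_norm _).2 ?_⟩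
    simpa only [norm_inv, Real.norm_eq_abs, abs_sub_comm] using Ne.lt_top hfin
  obtain hab_eq | ht_notMem := intervalIntegrable_sub_inv_iff.1
    ((intervalIntegrable_iff_integrableOn_Icc_of_le hab.le).2 hint)
  · exact hab.ne hab_eq
  · exact ht_notMem (Set.Icc_subset_uIcc ht)

theorem setLIntegral_Icc_abs_sub_rpow_neg_eq_top (hab : a < b) (ht : t ∈ Set.Icc a b)
    (hp : 1 ≤ p) :
    ∫⁻ s in Set.Icc a b, ENNReal.ofReal (|t - s| ^ (-p)) = ⊤ := by
  set C : ENNReal := ENNReal.ofReal ((b - a) ^ (p - 1))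
  have hle : ∀ s ∈ Set.Icc a b,
      ENNReal.ofReal |t - s|⁻¹ ≤ C * ENNReal.ofReal (|t - s| ^ (-p)) := by
    intro s hs
    rw [← ENNReal.ofReal_mul (Real.rpow_nonneg (sub_nonneg.2 hab.le) _)]
    exact ENNReal.ofReal_le_ofReal <| inv_le_rpow_sub_one_mul_rpow_neg (abs_nonneg _)
      (Real.dist_le_of_mem_Icc ht hs) hp
  have hmul_top : C * ∫⁻ s in Set.Icc a b, ENNReal.ofReal (|t - s| ^ (-p)) = ⊤ := by
    rw [← lintegral_const_mul' _ _ ENNReal.ofReal_ne_top, ← top_le_iff,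
      ← setLIntegral_Icc_inv_abs_sub_eq_top hab ht]
    exact setLIntegral_mono' measurableSet_Icc hle
  by_contra hne_top
  exact ENNReal.mul_ne_top ENNReal.ofReal_ne_top hne_top hmul_top

theorem measurable_lintegral_abs_sub_rpow_neg (ν : Measure ℝ) [SFinite ν] :
    Measurable fun q : ℝ × ℝ ↦ ∫⁻ s, ENNReal.ofReal (|q.1 - s| ^ (-q.2)) ∂ν :=
  Measurable.lintegral_prod_right' (f := fun r : (ℝ × ℝ) × ℝ ↦
    ENNReal.ofReal (|r.1.1 - r.2| ^ (-r.1.2))) (by fun_prop)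

theorem hurst_lt_one_of_integral_finite_general {μ : Measure ℝ} {H : ℝ → ℝ} (hab : a < b)
    (hH : AEMeasurable H μ)
    (hfin : ∫⁻ t, (∫⁻ s in Set.Icc a b, ENNReal.ofReal (|t - s| ^ (-(H t)))) ∂μ ≠ ⊤) :
    ∀ᵐ t ∂μ, t ∈ Set.Icc a b → H t < 1 := by
  have hmeas : AEMeasurable
      (fun t ↦ ∫⁻ s in Set.Icc a b, ENNReal.ofReal (|t - s| ^ (-(H t)))) μ :=
    (measurable_lintegral_abs_sub_rpow_neg (volume.restrict (Set.Icc a b))).comp_aemeasurable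
      (f := fun t ↦ (t, H t)) (aemeasurable_id.prodMk hH)
  filter_upwards [ae_lt_top' hmeas hfin] with t hinner ht
  by_contra! hge
  exact hinner.ne (setLIntegral_Icc_abs_sub_rpow_neg_eq_top hab ht hge)

end

/-- If the double integral `∫_a^b ∫_a^b |t-s|^{-H(t)} ds dt` is finite, then `H(t) < 1`
for Lebesgue-almost every `t ∈ [a,b]`. -/
theorem hurst_lt_one_of_integral_finite (a b : ℝ) (hab : a < b)
    (H : ℝ → ℝ) (hH : Measurable H)
    (hfin : (∫⁻ t in Set.Icc a b, ∫⁻ s in Set.Icc a b,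
        ENNReal.ofReal (|t - s| ^ (-(H t)))) ≠ ⊤) :
    ∀ᵐ t : ℝ, t ∈ Set.Icc a b → H t < 1 := by
  have hae := hurst_lt_one_of_integral_finite_general hab hH.aemeasurable hfin
  filter_upwards [(ae_restrict_iff' measurableSet_Icc).1 hae] with t hlt ht using hlt ht ht
end

section
/- Let t₀ ∈ ℝ, δ > 0, let B : [t₀, t₀+δ] → ℝ be continuous, and let L : ℝ → [0,∞) be a measurable function such that for every measurable g : ℝ → [0,∞), ∫_{t₀}^{t₀+δ} g(B(s)) ds = ∫_ℝ g(x) L(x) dx. Then δ ≤ 2 · (sup_{x ∈ ℝ} L(x)) · sup_{s ∈ [t₀,t₀+δ]} |B(s) − B(t₀)| (an inequality in [0,∞]). -/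
open MeasureTheory ENNReal

/-!
The path stays in the closed ball about `B t₀` whose radius is its largest displacement. The
occupation density formula for the indicator of that ball writes `δ` as the integral of `L` over
the ball, an interval of length twice the radius.
-/

section

variable {α E : Type*} [MeasurableSpace α] [MeasurableSpace E]

theorem setLIntegral_le_essSup_mul_measure (ν : Measure E) (ℓ : E → ℝ≥0∞) (A : Set E) :
    ∫⁻ x in A, ℓ x ∂ν ≤ essSup ℓ ν * ν A :=
  calc ∫⁻ x in A, ℓ x ∂ν ≤ ∫⁻ _ in A, essSup ℓ ν ∂ν :=
        lintegral_mono_ae (ae_restrict_of_ae (ENNReal.ae_le_essSup ℓ))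
    _ = essSup ℓ ν * ν A := setLIntegral_const A _

theorem essSup_restrict_le_biSup {β : Type*} [CompleteLattice β] {μ : Measure α} {s : Set α}
    (hs : NullMeasurableSet s μ) (f : α → β) : essSup f (μ.restrict s) ≤ ⨆ a ∈ s, f a :=
  essSup_le_of_ae_le _ <| (ae_restrict_mem₀ hs).mono fun _ ha ↦ le_biSup f ha

/-- `ℓ` is a density, with respect to `ν`, of the occupation measure `A ↦ μ {a | X a ∈ A}` of `X`.
When `X` is a path, `μ` is Lebesgue measure on a time interval and `ν` is Lebesgue measure, `ℓ` is
a local time of `X` on that interval. The notion is encoded by the occupation density formula and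
not by `μ.map X = ν.withDensity ℓ`, because `μ.map X` is `0` when `X` is not a.e. measurable. -/
def IsOccupationDensity (μ : Measure α) (X : α → E) (ν : Measure E) (ℓ : E → ℝ≥0∞) : Prop :=
  ∀ g : E → ℝ≥0∞, Measurable g → ∫⁻ a, g (X a) ∂μ = ∫⁻ x, g x * ℓ x ∂ν

namespace IsOccupationDensity

variable {μ : Measure α} {X : α → E} {ν : Measure E} {ℓ : E → ℝ≥0∞}

theorem measure_univ_eq_setLIntegral (h : IsOccupationDensity μ X ν ℓ) {A : Set E}
    (hA : MeasurableSet A) (hXA : ∀ᵐ a ∂μ, X a ∈ A) : μ Set.univ = ∫⁻ x in A, ℓ x ∂ν :=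
  calc μ Set.univ = ∫⁻ _, 1 ∂μ := lintegral_one.symm
    _ = ∫⁻ a, A.indicator 1 (X a) ∂μ :=
        lintegral_congr_ae (hXA.mono fun _ ha ↦ (Set.indicator_of_mem ha 1).symm)
    _ = ∫⁻ x, A.indicator 1 x * ℓ x ∂ν := h _ (measurable_one.indicator hA)
    _ = ∫⁻ x, A.indicator ℓ x ∂ν := by
        simp only [← Set.indicator_mul_left, Pi.one_apply, one_mul]
    _ = ∫⁻ x in A, ℓ x ∂ν := lintegral_indicator hA ℓ

theorem measure_univ_le_essSup_mul_measure_closedEBall [PseudoEMetricSpace E]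
    [OpensMeasurableSpace E] (h : IsOccupationDensity μ X ν ℓ) (c : E) :
    μ Set.univ ≤ essSup ℓ ν * ν (Metric.closedEBall c (essSup (fun a ↦ edist (X a) c) μ)) :=
  (h.measure_univ_eq_setLIntegral Metric.isClosed_closedEBall.measurableSet
    (ENNReal.ae_le_essSup fun a ↦ edist (X a) c)).trans_le
      (setLIntegral_le_essSup_mul_measure ν ℓ _)

end IsOccupationDensity

theorem length_le_two_mul_sup_localTime_mul_sup_osc_general {μ : Measure α} {X : α → ℝ}
    {ℓ : ℝ → ℝ≥0∞} (h : IsOccupationDensity μ X volume ℓ) (c : ℝ) :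
    μ Set.univ ≤ 2 * essSup ℓ volume * essSup (fun a ↦ ENNReal.ofReal |X a - c|) μ := by
  have hball := h.measure_univ_le_essSup_mul_measure_closedEBall c
  simp only [Real.volume_closedEBall, edist_dist, Real.dist_eq] at hball
  rwa [mul_comm 2, mul_assoc]

end

/-- Inequality (29): if `L` is an occupation density of a continuous function `B` on
`[t₀, t₀+δ]` (i.e. the occupation density formula holds), then
`δ ≤ 2 (sup_x L(x)) · sup_{s ∈ [t₀,t₀+δ]} |B(s) - B(t₀)|`, as an inequality in `[0,∞]`. -/
theorem length_le_two_mul_sup_localTime_mul_sup_osc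
    (t₀ δ : ℝ) (hδ : 0 < δ) (B : ℝ → ℝ) (hB : ContinuousOn B (Set.Icc t₀ (t₀ + δ)))
    (L : ℝ → ℝ) (hLmeas : Measurable L) (hLnn : ∀ x, 0 ≤ L x)
    (hocc : ∀ g : ℝ → ℝ≥0∞, Measurable g →
      ∫⁻ s in Set.Icc t₀ (t₀ + δ), g (B s) = ∫⁻ x : ℝ, g x * ENNReal.ofReal (L x)) :
    ENNReal.ofReal δ ≤
      2 * (⨆ x : ℝ, ENNReal.ofReal (L x)) *
        ⨆ s ∈ Set.Icc t₀ (t₀ + δ), ENNReal.ofReal |B s - B t₀| := by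
  have h := length_le_two_mul_sup_localTime_mul_sup_osc_general hocc (B t₀)
  rw [Measure.restrict_apply_univ, Real.volume_Icc, add_sub_cancel_left] at h
  grw [h, essSup_le_iSup, essSup_restrict_le_biSup nullMeasurableSet_Icc]
end

section
/- Let x_n, x : [0,1] → ℝ be continuous functions such that x_n converges to x uniformly on [0,1], and let a ≤ b be real numbers such that the Lebesgue measure of {s ∈ [0,1] : x(s) = a or x(s) = b} is zero. Then for every t ∈ [0,1], ∫_0^t 1_{[a,b]}(x_n(s)) ds → ∫_0^t 1_{[a,b]}(x(s)) ds as n → ∞. -/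
open MeasureTheory Filter

/-!
The indicator of `[a, b]` is bounded, and it is continuous off the frontier `{a, b}`. Hence
`1_{[a,b]}(x n s) → 1_{[a,b]}(x₀ s)` at every `s` with `x₀ s ∉ {a, b}`, that is, at almost every
`s`, and dominated convergence gives convergence of the occupation times.
-/

open scoped Topology

section FiniteMeasure

variable {ι α E : Type*} [TopologicalSpace E] [MeasurableSpace α] {μ : Measure α}
  [IsFiniteMeasure μ] {l : Filter ι} [l.IsCountablyGenerated] {x : ι → α → E} {x₀ : α → E}

theorem tendsto_integral_comp_of_ae_continuousAt {G : Type*} [NormedAddCommGroup G]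
    [NormedSpace ℝ G] {f : E → G} {C : ℝ} (hfC : ∀ y, ‖f y‖ ≤ C)
    (hfx : ∀ᶠ i in l, AEStronglyMeasurable (fun s => f (x i s)) μ)
    (hlim : ∀ᵐ s ∂μ, Tendsto (fun i => x i s) l (𝓝 (x₀ s)))
    (hcont : ∀ᵐ s ∂μ, ContinuousAt f (x₀ s)) :
    Tendsto (fun i => ∫ s, f (x i s) ∂μ) l (𝓝 (∫ s, f (x₀ s) ∂μ)) := by
  refine tendsto_integral_filter_of_norm_le_const hfx
    ⟨C, .of_forall fun i => .of_forall fun s => hfC (x i s)⟩ ?_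
  filter_upwards [hlim, hcont] with s hs hfs using hfs.tendsto.comp hs

theorem tendsto_integral_indicator_comp_of_ae_notMem_frontier [MeasurableSpace E] {I : Set E}
    (hI : MeasurableSet I) (hx : ∀ᶠ i in l, AEMeasurable (x i) μ)
    (hlim : ∀ᵐ s ∂μ, Tendsto (fun i => x i s) l (𝓝 (x₀ s)))
    (hfrontier : ∀ᵐ s ∂μ, x₀ s ∉ frontier I) :
    Tendsto (fun i => ∫ s, I.indicator (fun _ => (1 : ℝ)) (x i s) ∂μ) l
      (𝓝 (∫ s, I.indicator (fun _ => (1 : ℝ)) (x₀ s) ∂μ)) := by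
  have hmeas : Measurable (I.indicator fun _ => (1 : ℝ)) := measurable_const.indicator hI
  have hbound (y : E) : ‖I.indicator (fun _ => (1 : ℝ)) y‖ ≤ 1 :=
    (norm_indicator_le_norm_self _ y).trans norm_one.le
  exact tendsto_integral_comp_of_ae_continuousAt hbound
    (hx.mono fun i hi => (hmeas.comp_aemeasurable hi).aestronglyMeasurable) hlim
    (hfrontier.mono fun s hs => continuousOn_const.continuousAt_indicator hs)

end FiniteMeasure

theorem occupation_time_tendsto_of_tendstoUniformly_general {ι E : Type*} [TopologicalSpace E]
    [MeasurableSpace E] {l : Filter ι} [l.IsCountablyGenerated] {μ : Measure ℝ}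
    [IsLocallyFiniteMeasure μ] {x : ι → ℝ → E} {x₀ : ℝ → E} {I : Set E} {J : Set ℝ}
    (hI : MeasurableSet I) (hJ : J.OrdConnected)
    (hx : ∀ᶠ i in l, AEMeasurable (x i) (μ.restrict J))
    (hlim : ∀ᵐ s ∂μ.restrict J, Tendsto (fun i => x i s) l (𝓝 (x₀ s)))
    (hnull : μ {s ∈ J | x₀ s ∈ frontier I} = 0) {u : ℝ} (hu : u ∈ J) :
    ∀ t ∈ J, Tendsto (fun i => ∫ s in u..t, I.indicator (fun _ => (1 : ℝ)) (x i s) ∂μ) l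
      (𝓝 (∫ s in u..t, I.indicator (fun _ => (1 : ℝ)) (x₀ s) ∂μ)) := by
  intro t ht
  have hsub : Set.uIoc u t ⊆ J := Set.uIoc_subset_uIcc.trans (hJ.uIcc_subset hu ht)
  have hfrontier : ∀ᵐ s ∂μ.restrict (Set.uIoc u t), x₀ s ∉ frontier I := by
    rw [ae_restrict_iff' measurableSet_uIoc]
    filter_upwards [measure_eq_zero_iff_ae_notMem.1 hnull] with s hs hsut hsI
    exact hs ⟨hsub hsut, hsI⟩
  have hfinite : IsFiniteMeasure (μ.restrict (Set.uIoc u t)) :=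
    isFiniteMeasure_restrict.2 measure_Ioc_lt_top.ne
  simp only [intervalIntegral.intervalIntegral_eq_integral_uIoc]
  exact (tendsto_integral_indicator_comp_of_ae_notMem_frontier hI
    (hx.mono fun i hi => hi.mono_set hsub) (ae_restrict_of_ae_restrict_of_subset hsub hlim)
    hfrontier).const_smul _

/-- Continuity of the occupation-time functional (underlying Lemma 5.1): if continuous
functions `x n` converge uniformly on `[0,1]` to `x₀`, and the level sets `{x₀ = a}`,
`{x₀ = b}` have zero Lebesgue measure, then for every `t ∈ [0,1]`,
`∫_0^t 1_{[a,b]}(x n s) ds → ∫_0^t 1_{[a,b]}(x₀ s) ds`. -/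
theorem occupation_time_tendsto_of_tendstoUniformly
    (x : ℕ → ℝ → ℝ) (x₀ : ℝ → ℝ)
    (hx : ∀ n, ContinuousOn (x n) (Set.Icc 0 1)) (hx₀ : ContinuousOn x₀ (Set.Icc 0 1))
    (hconv : TendstoUniformlyOn x x₀ atTop (Set.Icc 0 1))
    (a b : ℝ) (hab : a ≤ b)
    (hnull : volume {s ∈ Set.Icc (0 : ℝ) 1 | x₀ s = a ∨ x₀ s = b} = 0) :
    ∀ t ∈ Set.Icc (0 : ℝ) 1,
      Tendsto
        (fun n => ∫ s in (0 : ℝ)..t, Set.indicator (Set.Icc a b) (fun _ => (1 : ℝ)) (x n s))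
        atTop
        (nhds (∫ s in (0 : ℝ)..t, Set.indicator (Set.Icc a b) (fun _ => (1 : ℝ)) (x₀ s))) := by
  exact occupation_time_tendsto_of_tendstoUniformly_general measurableSet_Icc Set.ordConnected_Icc
    (.of_forall fun n => (hx n).aemeasurable measurableSet_Icc)
    (ae_restrict_of_forall_mem measurableSet_Icc fun _ => hconv.tendsto_at)
    (by simpa [frontier_Icc hab] using hnull) (Set.left_mem_Icc.2 zero_le_one)
end
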